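/- Let ρ and σ be density matrices on the tensor product ℂ^{d_A} ⊗ ℂ^{d_B} ⊗ ℂ^{d_C} and let p ∈ (0,1). Then |p·I(A:B|C)_ρ + (1−p)·I(A:B|C)_σ − I(A:B|C)_{pρ+(1−p)σ}| ≤ h₂(p), where h₂(p) = −p·ln p − (1−p)·ln(1−p). -/

import Mathlib

open Matrix

/-- The von Neumann entropy `H(ρ) = Σ_i η(λ_i)` of a matrix, where `λ_i` are
its eigenvalues and `η(x) = −x·ln x` (and `0` if the matrix is not
Hermitian). -/
noncomputable def vnEntropy {n : Type*} [Fintype n] [DecidableEq n]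
    (ρ : Matrix n n ℂ) : ℝ :=
  if h : ρ.IsHermitian then ∑ i, Real.negMulLog (h.eigenvalues i) else 0

/-- Partial trace over the middle factor `B`:
`ρ_AC((i,k),(j,l)) = Σ_m ρ((i,m,k),(j,m,l))`. -/
noncomputable def ptrB {dA dB dC : ℕ}
    (ρ : Matrix (Fin dA × Fin dB × Fin dC) (Fin dA × Fin dB × Fin dC) ℂ) :
    Matrix (Fin dA × Fin dC) (Fin dA × Fin dC) ℂ :=
  Matrix.of fun p q => ∑ m : Fin dB, ρ (p.1, m, p.2) (q.1, m, q.2)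

/-- Partial trace over the first factor `A`:
`ρ_BC((m,k),(m',l)) = Σ_i ρ((i,m,k),(i,m',l))`. -/
noncomputable def ptrA {dA dB dC : ℕ}
    (ρ : Matrix (Fin dA × Fin dB × Fin dC) (Fin dA × Fin dB × Fin dC) ℂ) :
    Matrix (Fin dB × Fin dC) (Fin dB × Fin dC) ℂ :=
  Matrix.of fun p q => ∑ i : Fin dA, ρ (i, p.1, p.2) (i, q.1, q.2)

/-- Partial trace over the first two factors `A` and `B`:
`ρ_C(k,l) = Σ_{i,m} ρ((i,m,k),(i,m,l))`. -/
noncomputable def ptrAB {dA dB dC : ℕ}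
    (ρ : Matrix (Fin dA × Fin dB × Fin dC) (Fin dA × Fin dB × Fin dC) ℂ) :
    Matrix (Fin dC) (Fin dC) ℂ :=
  Matrix.of fun k l => ∑ i : Fin dA, ∑ m : Fin dB, ρ (i, m, k) (i, m, l)

/-- The quantum conditional mutual information
`I(A:B|C)_ρ = H(ρ_AC) + H(ρ_BC) − H(ρ) − H(ρ_C)`. -/
noncomputable def qcmi {dA dB dC : ℕ}
    (ρ : Matrix (Fin dA × Fin dB × Fin dC) (Fin dA × Fin dB × Fin dC) ℂ) : ℝ :=
  vnEntropy (ptrB ρ) + vnEntropy (ptrA ρ) - vnEntropy ρ - vnEntropy (ptrAB ρ)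


set_option linter.unusedSectionVars false

namespace QCMI

/-- `ρ = U diag(a) U†` with `U` unitary and `a ≥ 0`. -/
structure Spec {n : Type*} [Fintype n] [DecidableEq n]
    (ρ U : Matrix n n ℂ) (a : n → ℝ) : Prop where
  left : Uᴴ * U = 1
  right : U * Uᴴ = 1
  nonneg : ∀ i, 0 ≤ a i
  eq : ρ = U * diagonal (fun i => (a i : ℂ)) * Uᴴ

/-- overlaps -/
noncomputable def ov {n : Type*} [Fintype n] (U V : Matrix n n ℂ) (i j : n) : ℝ :=
  Complex.normSq ((Uᴴ * V) i j)

/-- relative entropy from spectral data -/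
noncomputable def relE {n : Type*} [Fintype n] (U V : Matrix n n ℂ) (a b : n → ℝ) : ℝ :=
  ∑ i, ∑ j, ov U V i j * a i * (Real.log (a i) - Real.log (b j))

/-- variational functional -/
noncomputable def Lf {n : Type*} [Fintype n] (s : ℝ) (ρ τ Z : Matrix n n ℂ) : ℝ :=
  2 * (ρ * Z).trace.re - (τ * (Z * Zᴴ)).trace.re - s * (ρ * (Zᴴ * Z)).trace.re

section
variable {n : Type*} [Fintype n] [DecidableEq n]

lemma ov_nonneg {n : Type*} [Fintype n] (U V : Matrix n n ℂ) (i j : n) : 0 ≤ ov U V i j := Complex.normSq_nonneg _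

lemma ov_sum {ρ τ U V : Matrix n n ℂ} {a b : n → ℝ} (hρ : Spec ρ U a) (hτ : Spec τ V b) (i : n) :
    ∑ j, ov U V i j = 1 := by
  have h : (Uᴴ * V) * (Uᴴ * V)ᴴ = 1 := by
    rw [conjTranspose_mul, conjTranspose_conjTranspose, Matrix.mul_assoc, ← Matrix.mul_assoc V,
      hτ.right, Matrix.one_mul, hρ.left]
  have h2 := congrFun (congrFun h i) i
  rw [Matrix.mul_apply, Matrix.one_apply_eq] at h2
  simp only [conjTranspose_apply, Complex.star_def, Complex.mul_conj] at h2
  unfold ov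
  exact_mod_cast h2

lemma diag_eq {ρ U : Matrix n n ℂ} {a : n → ℝ} (hρ : Spec ρ U a) (V : Matrix n n ℂ) (j : n) :
    (Vᴴ * ρ * V) j j = ((∑ i, ov U V i j * a i : ℝ) : ℂ) := by
  have : Vᴴ * ρ * V = (Uᴴ * V)ᴴ * (diagonal (fun i => (a i : ℂ)) * (Uᴴ * V)) := by
    rw [hρ.eq, conjTranspose_mul, conjTranspose_conjTranspose]
    simp only [Matrix.mul_assoc]
  rw [this, Matrix.mul_apply]
  push_cast
  refine Finset.sum_congr rfl fun i _ => ?_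
  rw [diagonal_mul, conjTranspose_apply, ov, ← Complex.mul_conj, Complex.star_def]
  ring

lemma diag_self {ρ U : Matrix n n ℂ} {a : n → ℝ} (hρ : Spec ρ U a) (j : n) :
    (Uᴴ * ρ * U) j j = (a j : ℂ) := by
  have : Uᴴ * ρ * U = (Uᴴ * U) * diagonal (fun i => (a i : ℂ)) * (Uᴴ * U) := by
    rw [hρ.eq]; simp only [Matrix.mul_assoc]
  rw [this, hρ.left]; simp

lemma trace_eq {ρ U : Matrix n n ℂ} {a : n → ℝ} (hρ : Spec ρ U a) :
    ρ.trace = ((∑ i, a i : ℝ) : ℂ) := by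
  rw [hρ.eq, trace_mul_comm, ← Matrix.mul_assoc, hρ.left, Matrix.one_mul, trace_diagonal]
  push_cast; rfl

lemma Lf_eq {ρ τ U V : Matrix n n ℂ} {a b : n → ℝ} (hρ : Spec ρ U a) (hτ : Spec τ V b)
    (s : ℝ) (Y : Matrix n n ℂ) :
    Lf s ρ τ (V * Y * Uᴴ) = ∑ i, ∑ j, (2 * (a i * ((Uᴴ * V) i j * Y j i).re)
      - (b j + s * a i) * Complex.normSq (Y j i)) := by
  have h1 : (ρ * (V * Y * Uᴴ)).trace = ∑ i, ∑ j, (a i : ℂ) * ((Uᴴ * V) i j * Y j i) := by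
    have : (ρ * (V * Y * Uᴴ)).trace
        = (diagonal (fun i => (a i : ℂ)) * ((Uᴴ * V) * Y)).trace := by
      rw [hρ.eq, ← Matrix.mul_assoc, trace_mul_comm]
      simp only [← Matrix.mul_assoc]
      rw [hρ.left, Matrix.one_mul]
    rw [this, Matrix.trace]
    refine Finset.sum_congr rfl fun i _ => ?_
    rw [diag_apply, diagonal_mul, Matrix.mul_apply, Finset.mul_sum]
  have h2 : (τ * ((V * Y * Uᴴ) * (V * Y * Uᴴ)ᴴ)).trace
      = ∑ j, ∑ i, (b j : ℂ) * (Complex.normSq (Y j i) : ℂ) := by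
    have : (τ * ((V * Y * Uᴴ) * (V * Y * Uᴴ)ᴴ)).trace
        = (diagonal (fun i => (b i : ℂ)) * (Y * Yᴴ)).trace := by
      have e : (V * Y * Uᴴ) * (V * Y * Uᴴ)ᴴ = V * (Y * Yᴴ) * Vᴴ := by
        simp only [conjTranspose_mul, conjTranspose_conjTranspose, Matrix.mul_assoc]
        rw [← Matrix.mul_assoc Uᴴ U, hρ.left, Matrix.one_mul]
      rw [e, hτ.eq, ← Matrix.mul_assoc, trace_mul_comm]
      simp only [← Matrix.mul_assoc]
      rw [hτ.left, Matrix.one_mul]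
      rw [Matrix.mul_assoc _ Vᴴ V, hτ.left, Matrix.mul_one]
    rw [this, Matrix.trace]
    refine Finset.sum_congr rfl fun i _ => ?_
    rw [diag_apply, diagonal_mul, Matrix.mul_apply, Finset.mul_sum]
    refine Finset.sum_congr rfl fun j _ => ?_
    rw [conjTranspose_apply, Complex.star_def, Complex.mul_conj]
  have h3 : (ρ * ((V * Y * Uᴴ)ᴴ * (V * Y * Uᴴ))).trace
      = ∑ i, ∑ j, (a i : ℂ) * (Complex.normSq (Y j i) : ℂ) := by
    have : (ρ * ((V * Y * Uᴴ)ᴴ * (V * Y * Uᴴ))).trace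
        = (diagonal (fun i => (a i : ℂ)) * (Yᴴ * Y)).trace := by
      have e : (V * Y * Uᴴ)ᴴ * (V * Y * Uᴴ) = U * (Yᴴ * Y) * Uᴴ := by
        simp only [conjTranspose_mul, conjTranspose_conjTranspose, Matrix.mul_assoc]
        rw [← Matrix.mul_assoc Vᴴ V, hτ.left, Matrix.one_mul]
      rw [e, hρ.eq, ← Matrix.mul_assoc, trace_mul_comm]
      simp only [← Matrix.mul_assoc]
      rw [hρ.left, Matrix.one_mul]
      rw [Matrix.mul_assoc _ Uᴴ U, hρ.left, Matrix.mul_one]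
    rw [this, Matrix.trace]
    refine Finset.sum_congr rfl fun i _ => ?_
    rw [diag_apply, diagonal_mul, Matrix.mul_apply, Finset.mul_sum]
    refine Finset.sum_congr rfl fun j _ => ?_
    rw [conjTranspose_apply, Complex.star_def, mul_comm (starRingEnd ℂ _), Complex.mul_conj]
  rw [Lf, h1, h2, h3, Finset.sum_comm (f := fun j i => (b j : ℂ) * (Complex.normSq (Y j i) : ℂ))]
  simp only [Complex.re_sum, Complex.re_ofReal_mul, Complex.ofReal_re, Finset.mul_sum,
    ← Finset.sum_sub_distrib]
  refine Finset.sum_congr rfl fun i _ => Finset.sum_congr rfl fun j _ => ?_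
  ring

/-- optimal value -/
noncomputable def Qf (s : ℝ) (U V : Matrix n n ℂ) (a b : n → ℝ) : ℝ :=
  ∑ i, ∑ j, ov U V i j * a i * (a i / (b j + s * a i))

lemma Lf_le {ρ τ U V : Matrix n n ℂ} {a b : n → ℝ} (hρ : Spec ρ U a) (hτ : Spec τ V b)
    {s : ℝ} (hs : 0 < s) (Z : Matrix n n ℂ) : Lf s ρ τ Z ≤ Qf s U V a b := by
  have hZ : Z = V * (Vᴴ * Z * U) * Uᴴ := by
    simp only [Matrix.mul_assoc]
    rw [hρ.right, Matrix.mul_one, ← Matrix.mul_assoc, hτ.right, Matrix.one_mul]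
  rw [hZ, Lf_eq hρ hτ]
  generalize Vᴴ * Z * U = Y
  refine Finset.sum_le_sum fun i _ => Finset.sum_le_sum fun j _ => ?_
  have ha := hρ.nonneg i
  have hb := hτ.nonneg j
  rcases ha.eq_or_lt with h0 | h0
  · rw [← h0]; simp
    exact mul_nonneg hb (Complex.normSq_nonneg _)
  · have hd : 0 < b j + s * a i := by positivity
    rw [ov]
    generalize (Uᴴ * V) i j = w
    generalize Y j i = y
    rw [← mul_div_assoc, le_div_iff₀ hd]
    simp only [Complex.normSq_apply, Complex.mul_re]
    generalize b j + s * a i = d at *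
    nlinarith [sq_nonneg (a i * w.re - d * y.re), sq_nonneg (a i * w.im + d * y.im)]

lemma exists_Lf {ρ τ U V : Matrix n n ℂ} {a b : n → ℝ} (hρ : Spec ρ U a) (hτ : Spec τ V b)
    {s : ℝ} (hs : 0 < s) : ∃ Z : Matrix n n ℂ, Lf s ρ τ Z = Qf s U V a b := by
  refine ⟨V * (Matrix.of fun j i => ((a i / (b j + s * a i) : ℝ) : ℂ) * star ((Uᴴ * V) i j)) * Uᴴ, ?_⟩
  rw [Lf_eq hρ hτ]
  refine Finset.sum_congr rfl fun i _ => Finset.sum_congr rfl fun j _ => ?_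
  have ha := hρ.nonneg i
  have hb := hτ.nonneg j
  rcases ha.eq_or_lt with h0 | h0
  · simp [← h0]
  · have hd : 0 < b j + s * a i := by positivity
    rw [ov, of_apply]
    generalize (Uᴴ * V) i j = w
    simp only [Complex.normSq_mul, Complex.normSq_ofReal, Complex.star_def, Complex.normSq_conj]
    have : (w * (((a i / (b j + s * a i) : ℝ) : ℂ) * (starRingEnd ℂ) w)).re
        = (a i / (b j + s * a i)) * Complex.normSq w := by
      rw [mul_left_comm, Complex.mul_conj, ← Complex.ofReal_mul, Complex.ofReal_re]
    rw [this]
    field_simp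
    ring

/-- integrated value -/
noncomputable def Ff (U V : Matrix n n ℂ) (a b : n → ℝ) (s : ℝ) : ℝ :=
  ∑ i, ∑ j, ov U V i j * a i * (Real.log (b j + s * a i) - Real.log (b j))

/-- support condition -/
def Supp (U V : Matrix n n ℂ) (a b : n → ℝ) : Prop :=
  ∀ i j, ov U V i j * a i ≠ 0 → 0 < b j

lemma Ff_deriv {ρ U V : Matrix n n ℂ} {a b : n → ℝ} (hρ : Spec ρ U a)
    (hS : Supp U V a b) {s : ℝ} (hs : 0 ≤ s) : HasDerivAt (Ff U V a b) (Qf s U V a b) s := by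
  unfold Ff Qf
  refine HasDerivAt.fun_sum fun i _ => HasDerivAt.fun_sum fun j _ => ?_
  by_cases h : ov U V i j * a i = 0
  · simp only [h, zero_mul]; exact hasDerivAt_const _ _
  · have hb := hS i j h
    have hd : b j + s * a i ≠ 0 := by have := hρ.nonneg i; positivity
    refine HasDerivAt.const_mul _ (HasDerivAt.sub_const _ ?_)
    refine HasDerivAt.log ?_ hd
    simpa using ((hasDerivAt_id s).mul_const (a i)).const_add (b j)

lemma Ff_tendsto {ρ τ U V : Matrix n n ℂ} {a b : n → ℝ} (hρ : Spec ρ U a) (hτ : Spec τ V b)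
    (hS : Supp U V a b) :
    Filter.Tendsto (fun s => Ff U V a b s - (∑ i, a i) * Real.log s) Filter.atTop
      (nhds (relE U V a b)) := by
  have e : ∀ s, Ff U V a b s - (∑ i, a i) * Real.log s
      = ∑ i, ∑ j, ov U V i j * a i * ((Real.log (b j + s * a i) - Real.log s) - Real.log (b j)) := by
    intro s
    have : (∑ i, a i) * Real.log s = ∑ i, ∑ j, ov U V i j * a i * Real.log s := by
      rw [Finset.sum_mul]
      refine Finset.sum_congr rfl fun i _ => ?_
      simp only [← Finset.sum_mul, ov_sum hρ hτ, one_mul]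
    rw [this, Ff]
    simp only [← Finset.sum_sub_distrib]
    refine Finset.sum_congr rfl fun i _ => Finset.sum_congr rfl fun j _ => ?_
    ring
  simp only [e]
  unfold relE
  refine tendsto_finsetSum _ fun i _ => tendsto_finsetSum _ fun j _ => ?_
  by_cases h : ov U V i j * a i = 0
  · simp [h]
  · have hb := hS i j h
    have ha : 0 < a i := lt_of_le_of_ne (hρ.nonneg i) (by rintro h'; simp [← h'] at h)
    refine Filter.Tendsto.const_mul _ (Filter.Tendsto.sub_const ?_ _)
    have h1 : Filter.Tendsto (fun s : ℝ => b j / s + a i) Filter.atTop (nhds (0 + a i)) :=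
      (tendsto_const_nhds.div_atTop Filter.tendsto_id).add_const _
    rw [zero_add] at h1
    have h2 := h1.log ha.ne'
    refine h2.congr' ?_
    filter_upwards [Filter.eventually_gt_atTop 0] with s hs
    rw [← Real.log_div (by positivity) hs.ne']
    congr 1
    field_simp

theorem relE_mono {m : Type*} [Fintype m] [DecidableEq m]
    {ρ τ U V : Matrix n n ℂ} {a b : n → ℝ} (hρ : Spec ρ U a) (hτ : Spec τ V b)
    (hS : Supp U V a b)
    {ρ' τ' U' V' : Matrix m m ℂ} {a' b' : m → ℝ} (hρ' : Spec ρ' U' a') (hτ' : Spec τ' V' b')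
    (hS' : Supp U' V' a' b') (htr : ρ.trace = ρ'.trace)
    (hL : ∀ s, 0 < s → ∀ Z', ∃ Z, Lf s ρ' τ' Z' ≤ Lf s ρ τ Z) :
    relE U' V' a' b' ≤ relE U V a b := by
  have hQ : ∀ s, 0 < s → Qf s U' V' a' b' ≤ Qf s U V a b := by
    intro s hs
    obtain ⟨Z', hZ'⟩ := exists_Lf hρ' hτ' hs
    obtain ⟨Z, hZ⟩ := hL s hs Z'
    rw [← hZ']
    exact hZ.trans (Lf_le hρ hτ hs Z)
  have hF : MonotoneOn (fun s => Ff U V a b s - Ff U' V' a' b' s) (Set.Ici 0) := by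
    have hd : ∀ s, 0 ≤ s → HasDerivAt (fun s => Ff U V a b s - Ff U' V' a' b' s)
        (Qf s U V a b - Qf s U' V' a' b') s := fun s hs =>
      (Ff_deriv hρ hS hs).sub (Ff_deriv hρ' hS' hs)
    refine monotoneOn_of_deriv_nonneg (convex_Ici 0)
      (fun s hs => (hd s hs).continuousAt.continuousWithinAt) ?_ ?_
    · intro s hs
      rw [interior_Ici] at hs
      exact (hd s (le_of_lt hs)).differentiableAt.differentiableWithinAt
    · intro s hs
      rw [interior_Ici] at hs
      rw [(hd s (le_of_lt hs)).deriv]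
      exact sub_nonneg.2 (hQ s hs)
  have hsum : ∑ i, a i = ∑ i, a' i := by
    rw [trace_eq hρ, trace_eq hρ'] at htr
    exact_mod_cast htr
  refine le_of_tendsto_of_tendsto (Ff_tendsto hρ' hτ' hS') (Ff_tendsto hρ hτ hS) ?_
  filter_upwards [Filter.eventually_ge_atTop 0] with s hs
  have := hF (Set.mem_Ici.2 le_rfl) (Set.mem_Ici.2 hs) hs
  simp only [Ff, zero_mul, add_zero, sub_self, mul_zero, Finset.sum_const_zero] at this
  rw [hsum]
  unfold Ff
  linarith

end

section
open scoped ComplexOrder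
open scoped Kronecker
variable {n : Type*} [Fintype n] [DecidableEq n]

lemma spec_of_posSemidef {ρ : Matrix n n ℂ} (h : ρ.PosSemidef) :
    ∃ (U : Matrix n n ℂ) (a : n → ℝ), Spec ρ U a ∧ vnEntropy ρ = ∑ i, Real.negMulLog (a i) := by
  refine ⟨h.1.eigenvectorUnitary, h.1.eigenvalues, ⟨?_, ?_, h.eigenvalues_nonneg, ?_⟩, ?_⟩
  · exact Unitary.coe_star_mul_self h.1.eigenvectorUnitary
  · exact Unitary.coe_mul_star_self h.1.eigenvectorUnitary
  · have := h.1.spectral_theorem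
    rw [Unitary.conjStarAlgAut_apply] at this
    exact this
  · rw [vnEntropy, dif_pos h.1]

lemma relE_eq {ρ τ U V : Matrix n n ℂ} {a b : n → ℝ} (hρ : Spec ρ U a) (hτ : Spec τ V b) :
    relE U V a b = - ∑ i, Real.negMulLog (a i)
      - ∑ j, (∑ i, ov U V i j * a i) * Real.log (b j) := by
  have h1 : ∑ i, Real.negMulLog (a i) = - ∑ i, ∑ j, ov U V i j * a i * Real.log (a i) := by
    rw [← Finset.sum_neg_distrib]
    refine Finset.sum_congr rfl fun i _ => ?_
    simp only [← Finset.sum_mul, ov_sum hρ hτ, one_mul, Real.negMulLog, neg_mul]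
  have h2 : ∑ j, (∑ i, ov U V i j * a i) * Real.log (b j)
      = ∑ i, ∑ j, ov U V i j * a i * Real.log (b j) := by
    simp only [Finset.sum_mul]
    exact Finset.sum_comm
  rw [h1, h2, neg_neg, relE]
  simp only [← Finset.sum_sub_distrib, mul_sub]

lemma mix_eq {ρ σ U T V : Matrix n n ℂ} {a c b : n → ℝ} {p : ℝ}
    (hρ : Spec ρ U a) (hσ : Spec σ T c) (hτ : Spec (p • ρ + (1 - p) • σ) V b) (j : n) :
    b j = p * (∑ i, ov U V i j * a i) + (1 - p) * (∑ i, ov T V i j * c i) := by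
  have h := diag_self hτ j
  have e : Vᴴ * (p • ρ + (1 - p) • σ) * V = p • (Vᴴ * ρ * V) + (1 - p) • (Vᴴ * σ * V) := by
    simp only [Matrix.mul_add, Matrix.add_mul, Matrix.mul_smul, Matrix.smul_mul]
  rw [e, Matrix.add_apply, Matrix.smul_apply, Matrix.smul_apply, diag_eq hρ, diag_eq hσ,
    Complex.real_smul, Complex.real_smul] at h
  exact_mod_cast h.symm

lemma mix_supp {ρ σ U T V : Matrix n n ℂ} {a c b : n → ℝ} {p : ℝ} (hp0 : 0 < p) (hp1 : p < 1)
    (hρ : Spec ρ U a) (hσ : Spec σ T c) (hτ : Spec (p • ρ + (1 - p) • σ) V b) :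
    Supp U V a b := by
  intro i j h
  rw [mix_eq hρ hσ hτ]
  have h0 : ∀ i, 0 ≤ ov U V i j * a i := fun i => mul_nonneg (ov_nonneg _ _ _ _) (hρ.nonneg i)
  have h1 : 0 ≤ ∑ i, ov T V i j * c i :=
    Finset.sum_nonneg fun i _ => mul_nonneg (ov_nonneg _ _ _ _) (hσ.nonneg i)
  have h2 : 0 < ∑ i, ov U V i j * a i :=
    Finset.sum_pos' (fun i _ => h0 i) ⟨i, Finset.mem_univ _, lt_of_le_of_ne (h0 i) h.symm⟩
  have h3 : 0 ≤ 1 - p := by linarith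
  exact add_pos_of_pos_of_nonneg (mul_pos hp0 h2) (mul_nonneg h3 h1)

lemma mix_swap (ρ σ : Matrix n n ℂ) (p : ℝ) :
    p • ρ + (1 - p) • σ = (1 - p) • σ + (1 - (1 - p)) • ρ := by
  rw [sub_sub_cancel, add_comm]

/-- Holevo quantity of a binary ensemble -/
noncomputable def Jf (p : ℝ) (ρ σ : Matrix n n ℂ) : ℝ :=
  vnEntropy (p • ρ + (1 - p) • σ) - p * vnEntropy ρ - (1 - p) * vnEntropy σ

lemma mix_pos {ρ σ : Matrix n n ℂ} (hρ : ρ.PosSemidef) (hσ : σ.PosSemidef) {p : ℝ}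
    (hp0 : 0 < p) (hp1 : p < 1) : (p • ρ + (1 - p) • σ).PosSemidef :=
  (hρ.smul hp0.le).add (hσ.smul (by linarith : (0 : ℝ) ≤ 1 - p))

lemma Jf_spec {ρ σ : Matrix n n ℂ} (hρ : ρ.PosSemidef) (hσ : σ.PosSemidef) {p : ℝ}
    (hp0 : 0 < p) (hp1 : p < 1) :
    ∃ (U T V : Matrix n n ℂ) (a c b : n → ℝ), Spec ρ U a ∧ Spec σ T c ∧
      Spec (p • ρ + (1 - p) • σ) V b ∧ Supp U V a b ∧ Supp T V c b ∧
      Jf p ρ σ = p * relE U V a b + (1 - p) * relE T V c b := by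
  obtain ⟨U, a, hU, hUe⟩ := spec_of_posSemidef hρ
  obtain ⟨T, c, hT, hTe⟩ := spec_of_posSemidef hσ
  obtain ⟨V, b, hV, hVe⟩ := spec_of_posSemidef (mix_pos hρ hσ hp0 hp1)
  refine ⟨U, T, V, a, c, b, hU, hT, hV, mix_supp hp0 hp1 hU hT hV, ?_, ?_⟩
  · exact mix_supp (by linarith) (by linarith) hT hU (mix_swap ρ σ p ▸ hV)
  · rw [Jf, hUe, hTe, hVe, relE_eq hU hV, relE_eq hT hV]
    have : ∑ j, Real.negMulLog (b j) = - (p * ∑ j, (∑ i, ov U V i j * a i) * Real.log (b j)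
        + (1 - p) * ∑ j, (∑ i, ov T V i j * c i) * Real.log (b j)) := by
      rw [Finset.mul_sum, Finset.mul_sum, ← Finset.sum_add_distrib, ← Finset.sum_neg_distrib]
      refine Finset.sum_congr rfl fun j _ => ?_
      rw [Real.negMulLog]
      nth_rewrite 1 [mix_eq hU hT hV j]
      ring
    rw [this]
    ring

lemma relE_nonneg {ρ τ U V : Matrix n n ℂ} {a b : n → ℝ} (hρ : Spec ρ U a) (hτ : Spec τ V b)
    (hS : Supp U V a b) (h1 : ρ.trace = 1) (h2 : τ.trace = 1) : 0 ≤ relE U V a b := by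
  have hu : Spec (1 : Matrix Unit Unit ℂ) 1 (fun _ => 1) :=
    ⟨by simp, by simp, by simp, by simp⟩
  have h := relE_mono hρ hτ hS hu hu (fun _ _ _ => one_pos) (by simp [h1]) (fun s hs Z' => by
    refine ⟨Z' () () • 1, le_of_eq ?_⟩
    generalize hz : Z' () () = z
    have hZ : Z' = z • 1 := by
      ext i j
      simp [← hz]
    subst hZ
    simp only [Lf, conjTranspose_smul, conjTranspose_one, Matrix.mul_smul, Matrix.smul_mul,
      Matrix.mul_one, trace_smul, h1, h2, trace_one, Fintype.card_unit, Nat.cast_one])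
  simpa [relE] using h

lemma relE_le {ρ σ U T V : Matrix n n ℂ} {a c b : n → ℝ} {p : ℝ} (hp0 : 0 < p) (hp1 : p < 1)
    (hρ : Spec ρ U a) (hσ : Spec σ T c) (hτ : Spec (p • ρ + (1 - p) • σ) V b)
    (hσp : σ.PosSemidef) (h1 : ρ.trace = 1) : relE U V a b ≤ - Real.log p := by
  have hov : ∀ i j, ov U U i j = if i = j then 1 else 0 := by
    intro i j
    rw [ov, hρ.left, Matrix.one_apply]
    split_ifs <;> simp
  have hτ2 : Spec (p • ρ) U (fun i => p * a i) := by
    refine ⟨hρ.left, hρ.right, fun i => mul_nonneg hp0.le (hρ.nonneg i), ?_⟩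
    conv_lhs => rw [hρ.eq]
    rw [← Matrix.smul_mul, ← Matrix.mul_smul, ← diagonal_smul]
    congr 3
    ext i
    simp
  have hS2 : Supp U U a (fun i => p * a i) := by
    intro i j h
    rw [hov] at h
    split_ifs at h with hij
    · subst hij
      rw [one_mul] at h
      exact mul_pos hp0 (lt_of_le_of_ne (hρ.nonneg i) h.symm)
    · simp at h
  have key := relE_mono hρ hτ2 hS2 hρ hτ (mix_supp hp0 hp1 hρ hσ hτ) rfl (fun s hs Z => by
    refine ⟨Z, ?_⟩
    have hz : 0 ≤ (σ * (Z * Zᴴ)).trace.re := by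
      have : (Zᴴ * σ * Z).PosSemidef := hσp.conjTranspose_mul_mul_same Z
      have h3 := this.trace_nonneg
      rw [Matrix.mul_assoc, trace_mul_comm, Matrix.mul_assoc] at h3
      exact (Complex.le_def.1 h3).1
    have : (((p • ρ + (1 - p) • σ)) * (Z * Zᴴ)).trace.re
        = ((p • ρ) * (Z * Zᴴ)).trace.re + (1 - p) * (σ * (Z * Zᴴ)).trace.re := by
      rw [Matrix.add_mul, trace_add, Matrix.smul_mul (1 - p), trace_smul (1 - p)]
      simp
    rw [Lf, Lf, this]
    have : 0 ≤ (1 - p) * (σ * (Z * Zᴴ)).trace.re := mul_nonneg (by linarith) hz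
    linarith)
  refine key.trans (le_of_eq ?_)
  have hsum : ∑ i, a i = 1 := by
    rw [trace_eq hρ] at h1
    exact_mod_cast h1
  have : ∀ i, a i * (Real.log (a i) - Real.log (p * a i)) = a i * (- Real.log p) := by
    intro i
    by_cases h : a i = 0
    · simp [h]
    · rw [Real.log_mul hp0.ne' h]; ring
  rw [relE]
  simp only [hov, ite_mul, one_mul, zero_mul, Finset.sum_ite_eq, Finset.mem_univ, if_true, this]
  rw [← Finset.sum_mul, hsum, one_mul]

lemma mix_trace {ρ σ : Matrix n n ℂ} (h1 : ρ.trace = 1) (h2 : σ.trace = 1) (p : ℝ) :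
    (p • ρ + (1 - p) • σ).trace = 1 := by
  rw [trace_add, trace_smul, trace_smul, h1, h2]
  simp

lemma Jf_nonneg {ρ σ : Matrix n n ℂ} (hρ : ρ.PosSemidef) (hσ : σ.PosSemidef) {p : ℝ}
    (hp0 : 0 < p) (hp1 : p < 1) (h1 : ρ.trace = 1) (h2 : σ.trace = 1) : 0 ≤ Jf p ρ σ := by
  obtain ⟨U, T, V, a, c, b, hU, hT, hV, hS1, hS2, h⟩ := Jf_spec hρ hσ hp0 hp1
  rw [h]
  have e1 := relE_nonneg hU hV hS1 h1 (mix_trace h1 h2 p)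
  have e2 := relE_nonneg hT hV hS2 h2 (mix_trace h1 h2 p)
  have h3 : 0 ≤ 1 - p := by linarith
  exact add_nonneg (mul_nonneg hp0.le e1) (mul_nonneg h3 e2)

lemma Jf_le {ρ σ : Matrix n n ℂ} (hρ : ρ.PosSemidef) (hσ : σ.PosSemidef) {p : ℝ}
    (hp0 : 0 < p) (hp1 : p < 1) (h1 : ρ.trace = 1) (h2 : σ.trace = 1) :
    Jf p ρ σ ≤ -(p * Real.log p) - (1 - p) * Real.log (1 - p) := by
  obtain ⟨U, T, V, a, c, b, hU, hT, hV, hS1, hS2, h⟩ := Jf_spec hρ hσ hp0 hp1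
  rw [h]
  have hq : 0 < 1 - p := by linarith
  have e1 := relE_le hp0 hp1 hU hT hV hσ h1
  have e2 := relE_le hq (by linarith) hT hU (mix_swap ρ σ p ▸ hV) hρ h2
  have f1 := mul_le_mul_of_nonneg_left e1 hp0.le
  have f2 := mul_le_mul_of_nonneg_left e2 hq.le
  linarith

/-- generic partial trace -/
noncomputable def ptr {k m : Type*} [Fintype k] (e : k × m ≃ n) (R : Matrix n n ℂ) :
    Matrix m m ℂ := ∑ i : k, R.submatrix (fun x => e (i, x)) (fun x => e (i, x))

/-- its adjoint -/
noncomputable def amp {k m : Type*} [DecidableEq k] (e : k × m ≃ n) (Z : Matrix m m ℂ) :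
    Matrix n n ℂ := ((1 : Matrix k k ℂ) ⊗ₖ Z).submatrix e.symm e.symm

variable {k m : Type*} [Fintype k] [DecidableEq k] [Fintype m] [DecidableEq m]

lemma amp_mul (e : k × m ≃ n) (X Y : Matrix m m ℂ) : amp e X * amp e Y = amp e (X * Y) := by
  rw [amp, amp, amp, submatrix_mul_equiv, ← mul_kronecker_mul, Matrix.one_mul]

lemma amp_star (e : k × m ≃ n) (X : Matrix m m ℂ) : (amp e X)ᴴ = amp e Xᴴ := by
  rw [amp, amp, conjTranspose_submatrix, conjTranspose_kronecker, conjTranspose_one]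

lemma amp_trace (e : k × m ≃ n) (R : Matrix n n ℂ) (Z : Matrix m m ℂ) :
    (R * amp e Z).trace = (ptr e R * Z).trace := by
  simp only [Matrix.trace, diag_apply, Matrix.mul_apply]
  rw [← e.sum_comp, Fintype.sum_prod_type, Finset.sum_comm]
  refine Finset.sum_congr rfl fun x _ => ?_
  simp only [ptr, Matrix.sum_apply, Finset.sum_mul, submatrix_apply]
  rw [Finset.sum_comm]
  rw [Finset.sum_comm]
  nth_rewrite 2 [Finset.sum_comm]
  refine Finset.sum_congr rfl fun i _ => ?_
  rw [← e.sum_comp, Fintype.sum_prod_type, Finset.sum_comm]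
  refine Finset.sum_congr rfl fun y _ => ?_
  simp [amp, Matrix.one_apply]

lemma ptr_trace (e : k × m ≃ n) (R : Matrix n n ℂ) : (ptr e R).trace = R.trace := by
  have := amp_trace e R 1
  rw [amp, one_kronecker_one, submatrix_one_equiv, Matrix.mul_one, Matrix.mul_one] at this
  exact this.symm

lemma ptr_pos (e : k × m ≃ n) {R : Matrix n n ℂ} (h : R.PosSemidef) : (ptr e R).PosSemidef :=
  posSemidef_sum _ fun _ _ => h.submatrix _

lemma ptr_mix (e : k × m ≃ n) (R S : Matrix n n ℂ) (p q : ℝ) :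
    ptr e (p • R + q • S) = p • ptr e R + q • ptr e S := by
  ext x y
  simp [ptr, Matrix.sum_apply, Finset.sum_add_distrib, Finset.mul_sum]

lemma Lf_amp (e : k × m ≃ n) (s : ℝ) (ρ τ : Matrix n n ℂ) (Z : Matrix m m ℂ) :
    Lf s (ptr e ρ) (ptr e τ) Z = Lf s ρ τ (amp e Z) := by
  simp only [Lf, amp_star, amp_mul, amp_trace]

lemma relE_ptr (e : k × m ≃ n) {ρ τ U V : Matrix n n ℂ} {a b : n → ℝ}
    (hρ : Spec ρ U a) (hτ : Spec τ V b) (hS : Supp U V a b)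
    {U' V' : Matrix m m ℂ} {a' b' : m → ℝ} (hρ' : Spec (ptr e ρ) U' a')
    (hτ' : Spec (ptr e τ) V' b') (hS' : Supp U' V' a' b') :
    relE U' V' a' b' ≤ relE U V a b :=
  relE_mono hρ hτ hS hρ' hτ' hS' (ptr_trace e ρ).symm
    fun s _ Z' => ⟨amp e Z', (Lf_amp e s ρ τ Z').le⟩

lemma Jf_ptr (e : k × m ≃ n) {ρ σ : Matrix n n ℂ} (hρ : ρ.PosSemidef) (hσ : σ.PosSemidef) {p : ℝ}
    (hp0 : 0 < p) (hp1 : p < 1) : Jf p (ptr e ρ) (ptr e σ) ≤ Jf p ρ σ := by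
  obtain ⟨U, T, V, a, c, b, hU, hT, hV, hS1, hS2, h⟩ := Jf_spec hρ hσ hp0 hp1
  obtain ⟨U', T', V', a', c', b', hU', hT', hV', hS1', hS2', h'⟩ :=
    Jf_spec (ptr_pos e hρ) (ptr_pos e hσ) hp0 hp1
  rw [← ptr_mix] at hV'
  rw [h, h']
  have e1 := relE_ptr e hU hV hS1 hU' hV' hS1'
  have e2 := relE_ptr e hT hV hS2 hT' hV' hS2'
  have f1 := mul_le_mul_of_nonneg_left e1 hp0.le
  have f2 := mul_le_mul_of_nonneg_left e2 (by linarith : 0 ≤ 1 - p)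
  linarith

end

/-- reordering for the partial trace over `B` -/
def eB (dA dB dC : ℕ) : Fin dB × (Fin dA × Fin dC) ≃ Fin dA × Fin dB × Fin dC where
  toFun x := (x.2.1, x.1, x.2.2)
  invFun x := (x.2.1, x.1, x.2.2)
  left_inv _ := rfl
  right_inv _ := rfl

lemma ptrB_eq {dA dB dC : ℕ}
    (ρ : Matrix (Fin dA × Fin dB × Fin dC) (Fin dA × Fin dB × Fin dC) ℂ) :
    ptrB ρ = ptr (eB dA dB dC) ρ := by
  ext x y
  simp [ptrB, ptr, Matrix.sum_apply, eB]

lemma ptrA_eq {dA dB dC : ℕ}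
    (ρ : Matrix (Fin dA × Fin dB × Fin dC) (Fin dA × Fin dB × Fin dC) ℂ) :
    ptrA ρ = ptr (Equiv.refl _) ρ := by
  ext x y
  simp [ptrA, ptr, Matrix.sum_apply]

lemma ptrAB_eq {dA dB dC : ℕ}
    (ρ : Matrix (Fin dA × Fin dB × Fin dC) (Fin dA × Fin dB × Fin dC) ℂ) :
    ptrAB ρ = ptr (Equiv.refl (Fin dB × Fin dC)) (ptrA ρ) := by
  ext x y
  simp only [ptrAB, ptrA, ptr, Matrix.sum_apply, of_apply, submatrix_apply, Equiv.refl_apply]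
  exact Finset.sum_comm

end QCMI

open scoped ComplexOrder in
/-- Local near-affinity of the quantum conditional mutual information:
`|p·I(A:B|C)_ρ + (1−p)·I(A:B|C)_σ − I(A:B|C)_{pρ+(1−p)σ}| ≤ h₂(p)`. -/
theorem abs_qcmi_convex_combination_le {dA dB dC : ℕ}
    (ρ σ : Matrix (Fin dA × Fin dB × Fin dC) (Fin dA × Fin dB × Fin dC) ℂ)
    (hρ : ρ.PosSemidef) (hρ_tr : ρ.trace = 1)
    (hσ : σ.PosSemidef) (hσ_tr : σ.trace = 1)
    (p : ℝ) (hp0 : 0 < p) (hp1 : p < 1) :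
    |p * qcmi ρ + (1 - p) * qcmi σ - qcmi (p • ρ + (1 - p) • σ)| ≤
      -(p * Real.log p) - (1 - p) * Real.log (1 - p) := by
  have hA : (ptrA ρ).PosSemidef := by rw [QCMI.ptrA_eq]; exact QCMI.ptr_pos _ hρ
  have hA' : (ptrA σ).PosSemidef := by rw [QCMI.ptrA_eq]; exact QCMI.ptr_pos _ hσ
  have hB : (ptrB ρ).PosSemidef := by rw [QCMI.ptrB_eq]; exact QCMI.ptr_pos _ hρ
  have hB' : (ptrB σ).PosSemidef := by rw [QCMI.ptrB_eq]; exact QCMI.ptr_pos _ hσ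
  have hC : (ptrAB ρ).PosSemidef := by rw [QCMI.ptrAB_eq]; exact QCMI.ptr_pos _ hA
  have hC' : (ptrAB σ).PosSemidef := by rw [QCMI.ptrAB_eq]; exact QCMI.ptr_pos _ hA'
  have tA : (ptrA ρ).trace = 1 := by rw [QCMI.ptrA_eq, QCMI.ptr_trace, hρ_tr]
  have tA' : (ptrA σ).trace = 1 := by rw [QCMI.ptrA_eq, QCMI.ptr_trace, hσ_tr]
  have tB : (ptrB ρ).trace = 1 := by rw [QCMI.ptrB_eq, QCMI.ptr_trace, hρ_tr]
  have tB' : (ptrB σ).trace = 1 := by rw [QCMI.ptrB_eq, QCMI.ptr_trace, hσ_tr]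
  have tC : (ptrAB ρ).trace = 1 := by rw [QCMI.ptrAB_eq, QCMI.ptr_trace, tA]
  have tC' : (ptrAB σ).trace = 1 := by rw [QCMI.ptrAB_eq, QCMI.ptr_trace, tA']
  have mA : ptrA (p • ρ + (1 - p) • σ) = p • ptrA ρ + (1 - p) • ptrA σ := by
    simp only [QCMI.ptrA_eq, QCMI.ptr_mix]
  have mB : ptrB (p • ρ + (1 - p) • σ) = p • ptrB ρ + (1 - p) • ptrB σ := by
    simp only [QCMI.ptrB_eq, QCMI.ptr_mix]
  have mC : ptrAB (p • ρ + (1 - p) • σ) = p • ptrAB ρ + (1 - p) • ptrAB σ := by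
    simp only [QCMI.ptrAB_eq, mA, QCMI.ptr_mix]
  have u1 := QCMI.Jf_le hρ hσ hp0 hp1 hρ_tr hσ_tr
  have u2 := QCMI.Jf_le hA hA' hp0 hp1 tA tA'
  have l1 := QCMI.Jf_nonneg hB hB' hp0 hp1 tB tB'
  have l2 := QCMI.Jf_nonneg hC hC' hp0 hp1 tC tC'
  have k1 : QCMI.Jf p (ptrB ρ) (ptrB σ) ≤ QCMI.Jf p ρ σ := by
    rw [QCMI.ptrB_eq, QCMI.ptrB_eq]; exact QCMI.Jf_ptr _ hρ hσ hp0 hp1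
  have k2 : QCMI.Jf p (ptrAB ρ) (ptrAB σ) ≤ QCMI.Jf p (ptrA ρ) (ptrA σ) := by
    rw [QCMI.ptrAB_eq, QCMI.ptrAB_eq]; exact QCMI.Jf_ptr _ hA hA' hp0 hp1
  have key : p * qcmi ρ + (1 - p) * qcmi σ - qcmi (p • ρ + (1 - p) • σ)
      = (QCMI.Jf p ρ σ - QCMI.Jf p (ptrB ρ) (ptrB σ))
        - (QCMI.Jf p (ptrA ρ) (ptrA σ) - QCMI.Jf p (ptrAB ρ) (ptrAB σ)) := by
    simp only [qcmi, QCMI.Jf, mA, mB, mC]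
    ring
  rw [key, abs_le]
  constructor <;> linarith
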